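/- (Theorem 2: Suboptimality bound for MPC with dynamic move blocking, relative form.) Let M = N − N_B ≥ 2, let γ > 0 be a real number with (γ+1)^{M−2} > γ^M, suppose Assumption (γ, M) holds together with the relaxed-increment condition V_M(f(x,μ_M(x))) ≤ V_{M−1}(f(x,μ_M(x))) + (γ^M/(γ+1)^{M−2})·ℓ(x, μ_M(x)) for all x ∈ X. Fix a blocked input sequence ũ : Fin N_B → U and an initial state x with N_B-step prediction x_{N_B} and blocked cost δ(x) < ∞, and assume 0 < V_∞(x) < ∞ and V_∞(x_{N_B}) ≤ V_∞(x). Then, with V_∞^{μ_N^DMB}(x) = δ(x) + V_∞^{μ_M}(x_{N_B}) denoting the infinite-horizon cost of the dynamic-move-blocking closed loop, one has (V_∞^{μ_N^DMB}(x) − V_∞(x)) / V_∞(x) ≤ γ^M / ((γ+1)^{M−2} − γ^M) + δ(x) / V_∞(x). -/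

import Mathlib

open scoped ENNReal

/-- Open-loop trajectory: `traj f x u k` is the state after `k` steps of the
dynamics `f` starting from `x` under the input sequence `u`. -/
noncomputable def traj {X U : Type*} (f : X → U → X) (x : X) (u : ℕ → U) : ℕ → X
  | 0 => x
  | k + 1 => f (traj f x u k) (u k)

/-- Extension of a finite input sequence `u : Fin N → U` to `ℕ → U`
(arbitrary values after time `N`). -/
noncomputable def extSeq {U : Type*} [Nonempty U] {N : ℕ} (u : Fin N → U) : ℕ → U :=
  fun k => if h : k < N then u ⟨k, h⟩ else Classical.arbitrary U

/-- Finite-horizon value function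
`V f ℓ N x = ⨅_{u : Fin N → U} ∑_{k=0}^{N-1} ℓ(x_u(k), u(k))`, with `V 0 ≡ 0`. -/
noncomputable def V {X U : Type*} [Nonempty U] (f : X → U → X) (ℓ : X → U → ℝ≥0∞)
    (N : ℕ) (x : X) : ℝ≥0∞ :=
  ⨅ u : Fin N → U, ∑ k ∈ Finset.range N, ℓ (traj f x (extSeq u) k) (extSeq u k)

/-- Infinite-horizon value function
`Vinf f ℓ x = ⨅_{u : ℕ → U} ∑_{k=0}^{∞} ℓ(x_u(k), u(k))`. -/
noncomputable def Vinf {X U : Type*} (f : X → U → X) (ℓ : X → U → ℝ≥0∞) (x : X) : ℝ≥0∞ :=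
  ⨅ u : ℕ → U, ∑' k : ℕ, ℓ (traj f x u k) (u k)

/-- Closed-loop trajectory under the feedback law `μ`. -/
noncomputable def clTraj {X U : Type*} (f : X → U → X) (μ : X → U) (x : X) : ℕ → X
  | 0 => x
  | k + 1 => f (clTraj f μ x k) (μ (clTraj f μ x k))

/-- Infinite-horizon closed-loop cost of the feedback law `μ`:
`Vcl f ℓ μ x = ∑_{k=0}^{∞} ℓ(x_k, μ(x_k))`. -/
noncomputable def Vcl {X U : Type*} (f : X → U → X) (ℓ : X → U → ℝ≥0∞) (μ : X → U)
    (x : X) : ℝ≥0∞ :=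
  ∑' k : ℕ, ℓ (clTraj f μ x k) (μ (clTraj f μ x k))

/-!
Let `Φ` and `Ψ` be the value functions for the horizons `M` and `M - 1`, and let `x⁺ = f x (μ x)`.
Dynamic programming `Φ(x) = ℓ(x, μ x) + Ψ(x⁺)` and the increment `Φ(x⁺) ≤ Ψ(x⁺) + a * ℓ(x, μ x)`
make `Φ` decrease along the closed loop by at least `1 - a` times the stage cost. Telescoping gives
`(1 - a) * Vcl ≤ Φ ≤ Vinf`, and `(1 - a)⁻¹ = 1 + a / (1 - a)` turns this into the relative bound,
where `a / (1 - a) = p / (q - p)` for `a = p / q`, `p = γ ^ M` and `q = (γ + 1) ^ (M - 2)`.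
-/

section Trajectories

variable {X U : Type*} (f : X → U → X)

lemma extSeq_of_lt [Nonempty U] {N : ℕ} (u : Fin N → U) {k : ℕ} (hk : k < N) :
    extSeq u k = u ⟨k, hk⟩ :=
  dif_pos hk

lemma traj_congr (x : X) {u v : ℕ → U} {n : ℕ} (h : ∀ k < n, u k = v k) :
    traj f x u n = traj f x v n := by
  induction n with
  | zero => rfl
  | succ n ih =>
    rw [traj, traj, ih fun k hk => h k (hk.trans n.lt_succ_self), h n n.lt_succ_self]

lemma V_le_sum_traj [Nonempty U] (ℓ : X → U → ℝ≥0∞) (N : ℕ) (x : X) (u : ℕ → U) :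
    V f ℓ N x ≤ ∑ k ∈ Finset.range N, ℓ (traj f x u k) (u k) := by
  let w : Fin N → U := fun i => u i
  have hw : ∀ k < N, extSeq w k = u k := fun _ hk => extSeq_of_lt w hk
  refine (iInf_le _ w).trans_eq (Finset.sum_congr rfl fun k hk => ?_)
  have hkN : k < N := Finset.mem_range.mp hk
  rw [traj_congr f x fun j hj => hw j (hj.trans hkN), hw k hkN]

lemma V_le_Vinf [Nonempty U] (ℓ : X → U → ℝ≥0∞) (N : ℕ) (x : X) : V f ℓ N x ≤ Vinf f ℓ x :=
  le_iInf fun u => (V_le_sum_traj f ℓ N x u).trans (ENNReal.sum_le_tsum _)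

end Trajectories

section ClosedLoop

variable {X U : Type*} {f : X → U → X} {μ : X → U}

lemma sum_clTraj_add_le {c Φ : X → ℝ≥0∞} (h : ∀ z, c z + Φ (f z (μ z)) ≤ Φ z) (x : X) (n : ℕ) :
    ∑ k ∈ Finset.range n, c (clTraj f μ x k) + Φ (clTraj f μ x n) ≤ Φ x := by
  induction n with
  | zero => simp [clTraj]
  | succ n ih =>
    calc ∑ k ∈ Finset.range (n + 1), c (clTraj f μ x k) + Φ (clTraj f μ x (n + 1))
        = ∑ k ∈ Finset.range n, c (clTraj f μ x k) +
            (c (clTraj f μ x n) + Φ (f (clTraj f μ x n) (μ (clTraj f μ x n)))) := by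
          rw [Finset.sum_range_succ, add_assoc, clTraj]
      _ ≤ ∑ k ∈ Finset.range n, c (clTraj f μ x k) + Φ (clTraj f μ x n) := by
          gcongr
          exact h _
      _ ≤ Φ x := ih

lemma tsum_clTraj_le {c Φ : X → ℝ≥0∞} (h : ∀ z, c z + Φ (f z (μ z)) ≤ Φ z) (x : X) :
    ∑' k, c (clTraj f μ x k) ≤ Φ x :=
  ENNReal.tsum_le_of_sum_range_le fun n => le_self_add.trans (sum_clTraj_add_le h x n)

lemma one_sub_mul_Vcl_le {ℓ : X → U → ℝ≥0∞} {Φ Ψ : X → ℝ≥0∞} {a : ℝ≥0∞} (ha : a ≤ 1)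
    (hdec : ∀ z, ℓ z (μ z) + Ψ (f z (μ z)) ≤ Φ z)
    (hinc : ∀ z, Φ (f z (μ z)) ≤ Ψ (f z (μ z)) + a * ℓ z (μ z)) (x : X) :
    (1 - a) * Vcl f ℓ μ x ≤ Φ x := by
  have hrelaxed : ∀ z, (1 - a) * ℓ z (μ z) + Φ (f z (μ z)) ≤ Φ z := fun z =>
    calc (1 - a) * ℓ z (μ z) + Φ (f z (μ z))
        ≤ (1 - a) * ℓ z (μ z) + (Ψ (f z (μ z)) + a * ℓ z (μ z)) := by
          gcongr
          exact hinc z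
      _ = (1 - a + a) * ℓ z (μ z) + Ψ (f z (μ z)) := by ring
      _ = ℓ z (μ z) + Ψ (f z (μ z)) := by rw [tsub_add_cancel_of_le ha, one_mul]
      _ ≤ Φ z := hdec z
  rw [Vcl, ← ENNReal.tsum_mul_left]
  exact tsum_clTraj_le hrelaxed x

end ClosedLoop

section Scalars

open ENNReal

lemma inv_one_sub_eq_one_add_div {a : ℝ≥0∞} (ha : a < 1) : (1 - a)⁻¹ = 1 + a / (1 - a) := by
  have hne_zero : 1 - a ≠ 0 := (tsub_pos_of_lt ha).ne'
  have hne_top : 1 - a ≠ ⊤ := sub_ne_top one_ne_top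
  calc (1 - a)⁻¹ = (1 - a + a) / (1 - a) := by rw [tsub_add_cancel_of_le ha.le, one_div]
    _ = 1 + a / (1 - a) := by rw [ENNReal.add_div, ENNReal.div_self hne_zero hne_top]

lemma le_add_div_one_sub_mul {a v w : ℝ≥0∞} (ha : a < 1) (h : (1 - a) * v ≤ w) :
    v ≤ w + a / (1 - a) * w := by
  have hne_zero : 1 - a ≠ 0 := (tsub_pos_of_lt ha).ne'
  have hne_top : 1 - a ≠ ⊤ := sub_ne_top one_ne_top
  calc v ≤ (1 - a)⁻¹ * w := by
        rwa [← ENNReal.mul_le_iff_le_inv hne_zero hne_top]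
    _ = w + a / (1 - a) * w := by rw [inv_one_sub_eq_one_add_div ha, add_mul, one_mul]

lemma ofReal_div_sub {p q : ℝ} (hp : 0 ≤ p) (hpq : p < q) :
    ENNReal.ofReal (p / (q - p)) =
      ENNReal.ofReal (p / q) / (1 - ENNReal.ofReal (p / q)) := by
  have hq : 0 < q := hp.trans_lt hpq
  have hlt : 0 < 1 - p / q := sub_pos.mpr ((div_lt_one hq).mpr hpq)
  have hratio : p / (q - p) = p / q / (1 - p / q) := by
    rw [one_sub_div hq.ne', div_div_div_cancel_right₀ hq.ne']
  rw [hratio, ofReal_div_of_pos hlt, ofReal_sub 1 (div_nonneg hp hq.le), ofReal_one]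

end Scalars

theorem dmb_suboptimality_rel_general {X U : Type*} [Nonempty U]
    (f : X → U → X) (ℓ : X → U → ℝ≥0∞) (μ : X → U) {m n NB : ℕ} {a : ℝ≥0∞} (ha : a < 1)
    (hdec : ∀ z, ℓ z (μ z) + V f ℓ m (f z (μ z)) ≤ V f ℓ n z)
    (hinc : ∀ z, V f ℓ n (f z (μ z)) ≤ V f ℓ m (f z (μ z)) + a * ℓ z (μ z))
    (ut : Fin NB → U) (x : X) (hpos : 0 < Vinf f ℓ x) (hfin : Vinf f ℓ x < ⊤)
    (hpred : V f ℓ n (traj f x (extSeq ut) NB) ≤ Vinf f ℓ x) :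
    (((∑ k ∈ Finset.range NB, ℓ (traj f x (extSeq ut) k) (extSeq ut k)) +
          Vcl f ℓ μ (traj f x (extSeq ut) NB)) - Vinf f ℓ x) / Vinf f ℓ x ≤
      a / (1 - a) +
        (∑ k ∈ Finset.range NB, ℓ (traj f x (extSeq ut) k) (extSeq ut k)) / Vinf f ℓ x := by
  set δ := ∑ k ∈ Finset.range NB, ℓ (traj f x (extSeq ut) k) (extSeq ut k)
  set y := traj f x (extSeq ut) NB
  set W := Vinf f ℓ x
  have hVcl : Vcl f ℓ μ y ≤ W + a / (1 - a) * W :=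
    le_add_div_one_sub_mul ha ((one_sub_mul_Vcl_le ha.le hdec hinc y).trans hpred)
  have hexcess : δ + Vcl f ℓ μ y - W ≤ a / (1 - a) * W + δ :=
    tsub_le_iff_right.mpr <|
      calc δ + Vcl f ℓ μ y ≤ δ + (W + a / (1 - a) * W) := by gcongr
        _ = a / (1 - a) * W + δ + W := by ring
  calc (δ + Vcl f ℓ μ y - W) / W ≤ (a / (1 - a) * W + δ) / W := by gcongr
    _ = a / (1 - a) + δ / W := by
        rw [ENNReal.add_div, ENNReal.mul_div_cancel_right hpos.ne' hfin.ne]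

/-- Theorem 2 (relative form): under the hypotheses of Theorem 1, for a blocked
input sequence `ũ` and an initial state `x` with `δ(x) < ∞`, `0 < V_∞(x) < ∞`
and `V_∞(x_{N_B}) ≤ V_∞(x)`, the infinite-horizon cost
`V_∞^{μ_N^DMB}(x) = δ(x) + V_∞^{μ_M}(x_{N_B})` of the dynamic-move-blocking
closed loop satisfies
`(V_∞^{μ_N^DMB}(x) - V_∞(x)) / V_∞(x) ≤ γ^M / ((γ+1)^{M-2} - γ^M) + δ(x)/V_∞(x)`. -/
theorem dmb_suboptimality_rel {X U : Type*} [Nonempty X] [Nonempty U]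
    (f : X → U → X) (ℓ : X → U → ℝ≥0∞) (N NB : ℕ) (hM : 2 ≤ N - NB)
    (γ : ℝ) (hγ : 0 < γ)
    (hstrict : γ ^ (N - NB) < (γ + 1) ^ (N - NB - 2))
    (μ : ℕ → X → U)
    (hDP : ∀ k, 2 ≤ k → k ≤ N - NB → ∀ x : X,
      V f ℓ k x = ℓ x (μ k x) + V f ℓ (k - 1) (f x (μ k x)))
    (h2 : ∀ x : X, V f ℓ 2 x ≤ ENNReal.ofReal (γ + 1) * V f ℓ 1 x)
    (hk : ∀ k, 2 ≤ k → k ≤ N - NB → ∀ x : X,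
      V f ℓ k x ≤ ENNReal.ofReal (γ + 1) * ℓ x (μ k x))
    (hinc : ∀ x : X,
      V f ℓ (N - NB) (f x (μ (N - NB) x)) ≤
        V f ℓ (N - NB - 1) (f x (μ (N - NB) x)) +
          ENNReal.ofReal (γ ^ (N - NB) / (γ + 1) ^ (N - NB - 2)) *
            ℓ x (μ (N - NB) x))
    (ut : Fin NB → U) (x : X)
    (hδ : (∑ k ∈ Finset.range NB, ℓ (traj f x (extSeq ut) k) (extSeq ut k)) < ⊤)
    (hpos : 0 < Vinf f ℓ x) (hfin : Vinf f ℓ x < ⊤)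
    (hpred : Vinf f ℓ (traj f x (extSeq ut) NB) ≤ Vinf f ℓ x) :
    (((∑ k ∈ Finset.range NB, ℓ (traj f x (extSeq ut) k) (extSeq ut k)) +
          Vcl f ℓ (μ (N - NB)) (traj f x (extSeq ut) NB)) -
        Vinf f ℓ x) / Vinf f ℓ x ≤
      ENNReal.ofReal
          (γ ^ (N - NB) / ((γ + 1) ^ (N - NB - 2) - γ ^ (N - NB))) +
        (∑ k ∈ Finset.range NB, ℓ (traj f x (extSeq ut) k) (extSeq ut k)) /
          Vinf f ℓ x := by
  have hratio : ENNReal.ofReal (γ ^ (N - NB) / (γ + 1) ^ (N - NB - 2)) < 1 :=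
    ENNReal.ofReal_lt_one.mpr ((div_lt_one (by positivity)).mpr hstrict)
  rw [ofReal_div_sub (by positivity) hstrict]
  exact dmb_suboptimality_rel_general f ℓ (μ (N - NB)) hratio
    (fun z => (hDP _ hM le_rfl z).ge) hinc ut x hpos hfin ((V_le_Vinf f ℓ _ _).trans hpred)
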